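/- arXiv:1811.11899 — 2 statements merged into one kernel-verified Lean document; each statement's English description precedes it below -/
import Mathlib

section
/- Let π ∈ ℝⁿ. (a) If F(Λ⁺(π)) = 0, then −λ⁻¹π ∈ C₀ for every λ > 0, and: if cπ = 0 then λ·ψ(−π/λ) converges, as λ → 0⁺, to ⟨π,b⟩ − ∫_{|u|≤1} ⟨π,u⟩ F(du) (this value is well defined in (−∞,+∞], since ⟨π,u⟩ ≤ 0 for F-a.e. u); if cπ ≠ 0 then λ·ψ(−π/λ) → +∞ as λ → 0⁺. (b) If F(Λ⁺(π)) > 0, then there exists λ₀ > 0 such that −π/λ ∉ C₀, hence ψ(−π/λ) = +∞, for all 0 < λ ≤ λ₀; in particular λ·ψ(−π/λ) → +∞ as λ → 0⁺. -/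
open MeasureTheory
open scoped RealInnerProductSpace ENNReal Topology

/-- The extended-real-valued convex function `ψ` from the paper: on the budget-constraint set
`C₀ = {π | F {u | 1 + ⟨π,u⟩ < 0} = 0}` it equals
`−⟨π,b⟩ − ((p−1)/2)⟨π,cπ⟩ − ∫ (p⁻¹((1+⟨π,u⟩)₊)^p − p⁻¹ − ⟨π,u⟩·1_{|u|≤1}) dF`,
and `+∞` outside of `C₀`. -/
noncomputable def psi (n : ℕ) (p : ℝ) (F : Measure (EuclideanSpace ℝ (Fin n)))
    (b : EuclideanSpace ℝ (Fin n))
    (c : EuclideanSpace ℝ (Fin n) →ₗ[ℝ] EuclideanSpace ℝ (Fin n))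
    (π : EuclideanSpace ℝ (Fin n)) : EReal :=
  if F {u : EuclideanSpace ℝ (Fin n) | 1 + ⟪π, u⟫ < 0} = 0 then
    (((-⟪π, b⟫) - ((p - 1) / 2) * ⟪π, c π⟫ -
      ∫ u, (p⁻¹ * (max (1 + ⟪π, u⟫) 0) ^ p - p⁻¹ -
        Set.indicator {u : EuclideanSpace ℝ (Fin n) | ‖u‖ ≤ 1}
          (fun u => ⟪π, u⟫) u) ∂F : ℝ) : EReal)
  else (⊤ : EReal)

/-!
If `F(Λ⁺(π)) > 0`, some level set `{⟨π,u⟩ > ε}` is already charged, so `-π/λ` leaves the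
budget-constraint set once `λ ≤ ε`.

Otherwise write `X = -⟨π,·⟩ ≥ 0`, `g(y) = ((1+y)^p - 1)/p` and `g_λ(x) = λ g(x/λ)`. Then
`λ ψ(-π/λ) = ⟨π,b⟩ + (1-p)/(2λ) ⟨π,cπ⟩ - ∫_{|u|>1} g_λ(X) dF + ∫_{|u|≤1} (X - g_λ(X)) dF`.
Subadditivity of `x ↦ x^p` gives `0 ≤ g_λ(x) ≤ λ^(1-p) x^p / p`, so the large jumps do not
contribute in the limit. For the small jumps `0 ≤ X - g_λ(X) ≤ X` and `X - g_λ(X) → X`, so Fatou's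
lemma identifies the limit as `∫_{|u|≤1} X dF`, even when that is infinite. The Gaussian term
explodes unless `⟨π,cπ⟩ = 0`, which for symmetric nonnegative `c` means `cπ = 0`.
-/

theorem tendsto_rpow_nhdsGT_zero {q : ℝ} (hq : 0 < q) :
    Filter.Tendsto (fun l : ℝ => l ^ q) (𝓝[>] 0) (𝓝 0) := by
  have h := (Real.continuousAt_rpow_const 0 q (Or.inr hq.le)).tendsto
  rw [Real.zero_rpow hq.ne'] at h
  exact h.mono_left nhdsWithin_le_nhds

open Filter in
theorem tendsto_lintegral_of_tendsto_of_le_limit {α ι : Type*} [MeasurableSpace α] {μ : Measure α}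
    {u : Filter ι} [u.IsCountablyGenerated] {f : ι → α → ℝ≥0∞} {g : α → ℝ≥0∞}
    (hf : ∀ i, AEMeasurable (f i) μ) (hle : ∀ᶠ i in u, f i ≤ᵐ[μ] g)
    (hlim : ∀ᵐ a ∂μ, Tendsto (fun i => f i a) u (𝓝 (g a))) :
    Tendsto (fun i => ∫⁻ a, f i a ∂μ) u (𝓝 (∫⁻ a, g a ∂μ)) := by
  rcases u.eq_or_neBot with rfl | _
  · exact tendsto_bot
  have fatou : ∫⁻ a, g a ∂μ ≤ liminf (fun i => ∫⁻ a, f i a ∂μ) u :=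
    calc ∫⁻ a, g a ∂μ = ∫⁻ a, liminf (fun i => f i a) u ∂μ :=
          lintegral_congr_ae (hlim.mono fun _ ha => ha.liminf_eq.symm)
      _ ≤ liminf (fun i => ∫⁻ a, f i a ∂μ) u := lintegral_liminf_le' hf
  exact tendsto_of_le_liminf_of_limsup_le fatou
    (limsup_le_of_le (h := hle.mono fun _ hi => lintegral_mono_ae hi))

theorem exists_pos_measure_setOf_lt_ne_zero {α : Type*} [MeasurableSpace α] {μ : Measure α}
    {X : α → ℝ} (h : μ {a | 0 < X a} ≠ 0) : ∃ ε > 0, μ {a | ε < X a} ≠ 0 := by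
  have hunion : {a | 0 < X a} = ⋃ k : ℕ, {a | 1 / ((k : ℝ) + 1) < X a} := by
    ext a
    simp only [Set.mem_iUnion, Set.mem_ofPred_eq]
    exact ⟨exists_nat_one_div_lt, fun ⟨k, hk⟩ => Nat.one_div_pos_of_nat.trans hk⟩
  rw [hunion] at h
  obtain ⟨k, hk⟩ := exists_measure_pos_of_not_measure_iUnion_null h
  exact ⟨_, Nat.one_div_pos_of_nat, hk.ne'⟩

theorem inner_apply_self_pos {E : Type*} [NormedAddCommGroup E] [InnerProductSpace ℝ E]
    {c : E →ₗ[ℝ] E} (hsymm : c.IsSymmetric) (hnonneg : ∀ x, 0 ≤ ⟪x, c x⟫) {x : E}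
    (hx : c x ≠ 0) : 0 < ⟪x, c x⟫ := by
  refine (hnonneg x).lt_of_ne' fun hzero => hx ?_
  have cauchy_schwarz : ⟪x, c (c x)⟫ * ⟪c x, c x⟫ ≤ ⟪x, c x⟫ * ⟪c x, c (c x)⟫ :=
    LinearMap.BilinForm.apply_mul_apply_le_of_forall_zero_le
      ((innerₗ E).compl₂ c) hnonneg x (c x)
  rw [← hsymm x (c x), hzero, zero_mul] at cauchy_schwarz
  exact inner_self_eq_zero.1 (mul_self_eq_zero.1 (cauchy_schwarz.antisymm (mul_self_nonneg _)))

section PowerGain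

variable {p y : ℝ}

/-- The gain in power utility `x ↦ x ^ p / p` when unit initial wealth earns the return `y`.
The positive part, as in `psi`, keeps `Real.rpow` away from negative bases. -/
noncomputable def powerGain (p y : ℝ) : ℝ := p⁻¹ * max (1 + y) 0 ^ p - p⁻¹

theorem measurable_powerGain (p : ℝ) : Measurable (powerGain p) := by
  unfold powerGain
  fun_prop

theorem powerGain_of_neg_one_le (hy : -1 ≤ y) : powerGain p y = p⁻¹ * ((1 + y) ^ p - 1) := by
  rw [powerGain, max_eq_left (by linarith), mul_sub_one]

theorem powerGain_nonneg (hp : 0 ≤ p) (hy : 0 ≤ y) : 0 ≤ powerGain p y := by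
  rw [powerGain_of_neg_one_le (by linarith)]
  have one_le : 1 ≤ (1 + y) ^ p := Real.one_le_rpow (by linarith) hp
  exact mul_nonneg (inv_nonneg.2 hp) (sub_nonneg.2 one_le)

theorem powerGain_le_self (hp0 : 0 < p) (hp1 : p ≤ 1) (hy : -1 ≤ y) : powerGain p y ≤ y := by
  rw [powerGain_of_neg_one_le hy, inv_mul_le_iff₀ hp0]
  linarith [rpow_one_add_le_one_add_mul_self hy hp0.le hp1]

theorem powerGain_le_rpow (hp0 : 0 ≤ p) (hp1 : p ≤ 1) (hy : 0 ≤ y) :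
    powerGain p y ≤ p⁻¹ * y ^ p := by
  rw [powerGain_of_neg_one_le (by linarith)]
  have subadditive := Real.rpow_add_le_add_rpow zero_le_one hy hp0 hp1
  rw [Real.one_rpow] at subadditive
  gcongr
  linarith

theorem self_sub_powerGain_le (hp0 : 0 < p) (hp1 : p ≤ 1) (hy : 0 ≤ y) :
    y - powerGain p y ≤ (1 - p) * y ^ 2 := by
  have hq : 0 ≤ 1 - p := sub_nonneg.2 hp1
  have bernoulli : (1 + y) ^ (1 - p) ≤ 1 + (1 - p) * y :=
    rpow_one_add_le_one_add_mul_self (by linarith) hq (by linarith)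
  have lower : 1 + p * (y - (1 - p) * y ^ 2) ≤ (1 + y) ^ p := by
    have hpos : 0 < 1 + (1 - p) * y := by positivity
    refine le_of_mul_le_mul_left ?_ hpos
    calc (1 + (1 - p) * y) * (1 + p * (y - (1 - p) * y ^ 2))
        = 1 + y - p * (1 - p) ^ 2 * y ^ 3 := by ring
      _ ≤ 1 + y := sub_le_self _ (by positivity)
      _ = (1 + y) ^ (1 - p) * (1 + y) ^ p := by
          rw [← Real.rpow_add (by linarith), sub_add_cancel, Real.rpow_one]
      _ ≤ (1 + (1 - p) * y) * (1 + y) ^ p := by gcongr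
  have gain_ge : y - (1 - p) * y ^ 2 ≤ powerGain p y := by
    rw [powerGain_of_neg_one_le (by linarith), le_inv_mul_iff₀ hp0]
    linarith
  linarith

end PowerGain

section PowerGainPerspective

variable {p l x : ℝ}

/-- The perspective `g_l(x) = l * g (x / l)` of `g = powerGain p`, through which the rescaling
`l * ψ(-π / l)` acts on the jump part of `ψ`. -/
noncomputable def powerGainPerspective (p l x : ℝ) : ℝ := l * powerGain p (l⁻¹ * x)

theorem measurable_powerGainPerspective (p l : ℝ) : Measurable (powerGainPerspective p l) :=
  ((measurable_powerGain p).comp (measurable_const_mul l⁻¹)).const_mul l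

theorem powerGainPerspective_nonneg (hp : 0 ≤ p) (hl : 0 ≤ l) (hx : 0 ≤ x) :
    0 ≤ powerGainPerspective p l x :=
  mul_nonneg hl (powerGain_nonneg hp (by positivity))

theorem powerGainPerspective_le_self (hp0 : 0 < p) (hp1 : p ≤ 1) (hl : 0 < l) (hx : 0 ≤ x) :
    powerGainPerspective p l x ≤ x := by
  have hy : 0 ≤ l⁻¹ * x := by positivity
  calc l * powerGain p (l⁻¹ * x) ≤ l * (l⁻¹ * x) := by
        gcongr
        exact powerGain_le_self hp0 hp1 (by linarith)
    _ = x := mul_inv_cancel_left₀ hl.ne' x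

theorem powerGainPerspective_le_rpow (hp0 : 0 ≤ p) (hp1 : p ≤ 1) (hl : 0 < l) (hx : 0 ≤ x) :
    powerGainPerspective p l x ≤ l ^ (1 - p) * (p⁻¹ * x ^ p) :=
  calc l * powerGain p (l⁻¹ * x) ≤ l * (p⁻¹ * (l⁻¹ * x) ^ p) := by
        gcongr
        exact powerGain_le_rpow hp0 hp1 (by positivity)
    _ = l ^ (1 - p) * (p⁻¹ * x ^ p) := by
        rw [Real.mul_rpow (by positivity) hx, Real.inv_rpow hl.le, Real.rpow_sub hl, Real.rpow_one]
        ring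

theorem self_sub_powerGainPerspective_le (hp0 : 0 < p) (hp1 : p ≤ 1) (hl : 0 < l) (hx : 0 ≤ x) :
    x - powerGainPerspective p l x ≤ (1 - p) * l⁻¹ * x ^ 2 :=
  calc x - l * powerGain p (l⁻¹ * x) = l * (l⁻¹ * x - powerGain p (l⁻¹ * x)) := by
        rw [mul_sub, mul_inv_cancel_left₀ hl.ne']
    _ ≤ l * ((1 - p) * (l⁻¹ * x) ^ 2) := by
        gcongr
        exact self_sub_powerGain_le hp0 hp1 (by positivity)
    _ = (1 - p) * l⁻¹ * x ^ 2 := by field_simp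

theorem tendsto_powerGainPerspective_nhdsGT_zero (hp0 : 0 ≤ p) (hp1 : p < 1) (hx : 0 ≤ x) :
    Filter.Tendsto (fun l => powerGainPerspective p l x) (𝓝[>] 0) (𝓝 0) := by
  have bound_tendsto := (tendsto_rpow_nhdsGT_zero (sub_pos.2 hp1)).mul_const (p⁻¹ * x ^ p)
  rw [zero_mul] at bound_tendsto
  refine squeeze_zero' ?_ ?_ bound_tendsto <;> filter_upwards [self_mem_nhdsWithin] with l hl
  · exact powerGainPerspective_nonneg hp0 (le_of_lt hl) hx
  · exact powerGainPerspective_le_rpow hp0 hp1.le hl hx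

end PowerGainPerspective

section Integrals

variable {α : Type*} [MeasurableSpace α] {μ : Measure α} {X : α → ℝ} {p l : ℝ}

theorem aestronglyMeasurable_powerGainPerspective (hX : AEMeasurable X μ) :
    AEStronglyMeasurable (fun a => powerGainPerspective p l (X a)) μ :=
  ((measurable_powerGainPerspective p l).comp_aemeasurable hX).aestronglyMeasurable

theorem integrable_powerGainPerspective (hp0 : 0 ≤ p) (hp1 : p ≤ 1) (hl : 0 < l)
    (hX : AEMeasurable X μ) (hX0 : 0 ≤ᵐ[μ] X) (hXp : Integrable (fun a => X a ^ p) μ) :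
    Integrable (fun a => powerGainPerspective p l (X a)) μ := by
  refine ((hXp.const_mul p⁻¹).const_mul (l ^ (1 - p))).mono'
    (aestronglyMeasurable_powerGainPerspective hX) ?_
  filter_upwards [hX0] with a ha
  rw [Real.norm_of_nonneg (powerGainPerspective_nonneg hp0 hl.le ha)]
  exact powerGainPerspective_le_rpow hp0 hp1 hl ha

theorem integrable_self_sub_powerGainPerspective (hp0 : 0 < p) (hp1 : p ≤ 1) (hl : 0 < l)
    (hX : AEMeasurable X μ) (hX0 : 0 ≤ᵐ[μ] X) (hX2 : Integrable (fun a => X a ^ 2) μ) :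
    Integrable (fun a => X a - powerGainPerspective p l (X a)) μ := by
  refine (hX2.const_mul ((1 - p) * l⁻¹)).mono'
    (hX.aestronglyMeasurable.sub (aestronglyMeasurable_powerGainPerspective hX)) ?_
  filter_upwards [hX0] with a ha
  rw [Real.norm_of_nonneg (sub_nonneg.2 (powerGainPerspective_le_self hp0 hp1 hl ha))]
  exact self_sub_powerGainPerspective_le hp0 hp1 hl ha

theorem tendsto_integral_powerGainPerspective (hp0 : 0 ≤ p) (hp1 : p < 1)
    (hX : AEMeasurable X μ) (hX0 : 0 ≤ᵐ[μ] X) (hXp : Integrable (fun a => X a ^ p) μ) :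
    Filter.Tendsto (fun l => ∫ a, powerGainPerspective p l (X a) ∂μ) (𝓝[>] 0) (𝓝 0) := by
  have bound_tendsto :=
    (tendsto_rpow_nhdsGT_zero (sub_pos.2 hp1)).mul_const (∫ a, p⁻¹ * X a ^ p ∂μ)
  rw [zero_mul] at bound_tendsto
  refine squeeze_zero' ?_ ?_ bound_tendsto <;> filter_upwards [self_mem_nhdsWithin] with l hl
  · exact integral_nonneg_of_ae
      (hX0.mono fun a ha => powerGainPerspective_nonneg hp0 (le_of_lt hl) ha)
  · rw [← integral_const_mul]
    exact integral_mono_ae (integrable_powerGainPerspective hp0 hp1.le hl hX hX0 hXp)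
      ((hXp.const_mul p⁻¹).const_mul _)
      (hX0.mono fun a ha => powerGainPerspective_le_rpow hp0 hp1.le hl ha)

theorem tendsto_lintegral_self_sub_powerGainPerspective (hp0 : 0 ≤ p) (hp1 : p < 1)
    (hX : AEMeasurable X μ) (hX0 : 0 ≤ᵐ[μ] X) :
    Filter.Tendsto (fun l => ∫⁻ a, ENNReal.ofReal (X a - powerGainPerspective p l (X a)) ∂μ)
      (𝓝[>] 0) (𝓝 (∫⁻ a, ENNReal.ofReal (X a) ∂μ)) := by
  refine tendsto_lintegral_of_tendsto_of_le_limit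
    (fun l => (hX.sub (aestronglyMeasurable_powerGainPerspective hX).aemeasurable).ennreal_ofReal)
    ?_ ?_
  · filter_upwards [self_mem_nhdsWithin] with l hl
    filter_upwards [hX0] with a ha
    exact ENNReal.ofReal_le_ofReal
      (sub_le_self _ (powerGainPerspective_nonneg hp0 (le_of_lt hl) ha))
  · filter_upwards [hX0] with a ha
    refine ENNReal.tendsto_ofReal ?_
    simpa only [sub_zero] using
      (tendsto_powerGainPerspective_nhdsGT_zero hp0 hp1 ha).const_sub (X a)

theorem mul_integral_powerGain_sub_indicator {D : Set α} (hD : MeasurableSet D)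
    (hp0 : 0 < p) (hp1 : p ≤ 1) (hl : 0 < l) (hX : AEMeasurable X μ) (hX0 : 0 ≤ᵐ[μ] X)
    (hX2 : IntegrableOn (fun a => X a ^ 2) D μ) (hXp : IntegrableOn (fun a => X a ^ p) Dᶜ μ) :
    l * ∫ a, (powerGain p (l⁻¹ * X a) - D.indicator (fun a => l⁻¹ * X a) a) ∂μ =
      ∫ a in Dᶜ, powerGainPerspective p l (X a) ∂μ -
        ∫ a in D, (X a - powerGainPerspective p l (X a)) ∂μ := by
  set f : α → ℝ := fun a =>
    l * (powerGain p (l⁻¹ * X a) - D.indicator (fun a => l⁻¹ * X a) a) with hf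
  have f_on : Set.EqOn f (fun a => -(X a - powerGainPerspective p l (X a))) D := fun a ha => by
    simp only [hf, Set.indicator_of_mem ha, powerGainPerspective, mul_sub,
      mul_inv_cancel_left₀ hl.ne', neg_sub]
  have f_on_compl : Set.EqOn f (fun a => powerGainPerspective p l (X a)) Dᶜ := fun a ha => by
    simp only [hf, Set.indicator_of_notMem ha, powerGainPerspective, sub_zero]
  have f_integrableOn : IntegrableOn f D μ :=
    IntegrableOn.congr_fun (integrable_self_sub_powerGainPerspective hp0 hp1 hl hX.restrict
      (ae_restrict_of_ae hX0) hX2).neg f_on.symm hD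
  have f_integrableOn_compl : IntegrableOn f Dᶜ μ :=
    IntegrableOn.congr_fun (integrable_powerGainPerspective hp0.le hp1 hl hX.restrict
      (ae_restrict_of_ae hX0) hXp) f_on_compl.symm hD.compl
  have f_integrable : Integrable f μ := by
    simpa only [Set.union_compl_self, integrableOn_univ] using
      f_integrableOn.union f_integrableOn_compl
  rw [← integral_const_mul, ← integral_add_compl hD f_integrable, setIntegral_congr_fun hD f_on,
    setIntegral_congr_fun hD.compl f_on_compl, integral_neg, neg_add_eq_sub]

end Integrals

theorem measurableSet_norm_le_one {E : Type*} [NormedAddCommGroup E] [MeasurableSpace E]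
    [OpensMeasurableSpace E] : MeasurableSet {u : E | ‖u‖ ≤ 1} :=
  measurableSet_le measurable_norm measurable_const

section LevyIntegrability

variable {E : Type*} [NormedAddCommGroup E] [InnerProductSpace ℝ E] [MeasurableSpace E]
  [OpensMeasurableSpace E] {F : Measure E} {p : ℝ}

theorem integrableOn_inner_sq (hF : ∫⁻ u, ENNReal.ofReal (min (‖u‖ ^ 2) 1) ∂F ≠ ⊤) (π : E) :
    IntegrableOn (fun u => ⟪π, u⟫ ^ 2) {u | ‖u‖ ≤ 1} F := by
  have levy : Integrable (fun u : E => min (‖u‖ ^ 2) 1) F :=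
    (lintegral_ofReal_ne_top_iff_integrable
      (by fun_prop : Measurable _).aestronglyMeasurable (ae_of_all _ fun u => by positivity)).1 hF
  refine (levy.restrict.const_mul (‖π‖ ^ 2)).mono'
    (by fun_prop : Measurable _).aestronglyMeasurable ?_
  filter_upwards [ae_restrict_mem measurableSet_norm_le_one] with u hu
  rw [Real.norm_of_nonneg (sq_nonneg _), min_eq_left (pow_le_one₀ (norm_nonneg u) hu), ← mul_pow,
    ← sq_abs]
  gcongr
  exact abs_real_inner_le_norm π u

theorem integrableOn_neg_inner_rpow (hp : 0 ≤ p)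
    (hF : ∫⁻ u in {u : E | 1 < ‖u‖}, ENNReal.ofReal (‖u‖ ^ p) ∂F ≠ ⊤) {π : E}
    (hπ : ∀ᵐ u ∂F, ⟪π, u⟫ ≤ 0) :
    IntegrableOn (fun u => (-⟪π, u⟫) ^ p) {u | ‖u‖ ≤ 1}ᶜ F := by
  have compl_eq : {u : E | ‖u‖ ≤ 1}ᶜ = {u | 1 < ‖u‖} := by
    ext u
    exact not_le (a := ‖u‖)
  rw [compl_eq]
  have moment : IntegrableOn (fun u : E => ‖u‖ ^ p) {u | 1 < ‖u‖} F :=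
    (lintegral_ofReal_ne_top_iff_integrable
      (by fun_prop : Measurable _).aestronglyMeasurable (ae_of_all _ fun u => by positivity)).1 hF
  refine (moment.const_mul (‖π‖ ^ p)).mono' (by fun_prop : Measurable _).aestronglyMeasurable ?_
  filter_upwards [ae_restrict_of_ae hπ] with u hu
  have hX : 0 ≤ -⟪π, u⟫ := neg_nonneg.2 hu
  rw [Real.norm_of_nonneg (by positivity), ← Real.mul_rpow (by positivity) (by positivity)]
  gcongr
  exact (neg_le_abs _).trans (abs_real_inner_le_norm π u)

end LevyIntegrability

section BudgetConstraint

variable {E : Type*} [NormedAddCommGroup E] [InnerProductSpace ℝ E] [MeasurableSpace E]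
  {F : Measure E} {π : E}

/-- The budget-constraint set `C₀`: the portfolios `π` under which wealth stays nonnegative
after `F`-almost every jump. -/
def budgetConstraintSet (F : Measure E) : Set E := {π | F {u | 1 + ⟪π, u⟫ < 0} = 0}

theorem mem_budgetConstraintSet_iff_ae :
    π ∈ budgetConstraintSet F ↔ ∀ᵐ u ∂F, 0 ≤ 1 + ⟪π, u⟫ := by
  simp only [budgetConstraintSet, Set.mem_ofPred_eq, ae_iff, not_le]

theorem neg_inv_smul_mem_budgetConstraintSet (hπ : ∀ᵐ u ∂F, ⟪π, u⟫ ≤ 0) {l : ℝ} (hl : 0 ≤ l) :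
    -(l⁻¹ • π) ∈ budgetConstraintSet F := by
  rw [mem_budgetConstraintSet_iff_ae]
  filter_upwards [hπ] with u hu
  rw [inner_neg_left, real_inner_smul_left]
  linarith [mul_nonpos_of_nonneg_of_nonpos (inv_nonneg.2 hl) hu]

theorem exists_forall_neg_inv_smul_notMem_budgetConstraintSet (h : F {u | 0 < ⟪π, u⟫} ≠ 0) :
    ∃ l₀ : ℝ, 0 < l₀ ∧ ∀ l : ℝ, 0 < l → l ≤ l₀ → -(l⁻¹ • π) ∉ budgetConstraintSet F := by
  obtain ⟨ε, hε, hFε⟩ := exists_pos_measure_setOf_lt_ne_zero h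
  refine ⟨ε, hε, fun l hl hlε hmem => hFε (measure_mono_null (fun u (hu : ε < ⟪π, u⟫) => ?_) hmem)⟩
  have one_lt : 1 < l⁻¹ * ⟪π, u⟫ := (lt_inv_mul_iff₀ hl).2 (by linarith)
  change 1 + ⟪-(l⁻¹ • π), u⟫ < 0
  rw [inner_neg_left, real_inner_smul_left]
  linarith

end BudgetConstraint

section Psi

variable {n : ℕ} {p : ℝ} {F : Measure (EuclideanSpace ℝ (Fin n))} {b : EuclideanSpace ℝ (Fin n)}
  {c : EuclideanSpace ℝ (Fin n) →ₗ[ℝ] EuclideanSpace ℝ (Fin n)} {π : EuclideanSpace ℝ (Fin n)}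

theorem psi_of_mem_budgetConstraintSet (h : π ∈ budgetConstraintSet F) :
    psi n p F b c π = ((-⟪π, b⟫ - (p - 1) / 2 * ⟪π, c π⟫ -
      ∫ u, (powerGain p ⟪π, u⟫ - {u | ‖u‖ ≤ 1}.indicator (fun u => ⟪π, u⟫) u) ∂F : ℝ) : EReal) :=
  if_pos h

theorem psi_of_notMem_budgetConstraintSet (h : π ∉ budgetConstraintSet F) :
    psi n p F b c π = ⊤ :=
  if_neg h

theorem mul_psi_neg_inv_smul (hp0 : 0 < p) (hp1 : p ≤ 1) {l : ℝ} (hl : 0 < l)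
    (hπ : ∀ᵐ u ∂F, ⟪π, u⟫ ≤ 0)
    (hsmall : IntegrableOn (fun u => ⟪π, u⟫ ^ 2) {u | ‖u‖ ≤ 1} F)
    (hlarge : IntegrableOn (fun u => (-⟪π, u⟫) ^ p) {u | ‖u‖ ≤ 1}ᶜ F) :
    (l : EReal) * psi n p F b c (-(l⁻¹ • π)) =
      ((⟪π, b⟫ + (1 - p) / 2 * ⟪π, c π⟫ * l⁻¹ -
        ∫ u in {u | ‖u‖ ≤ 1}ᶜ, powerGainPerspective p l (-⟪π, u⟫) ∂F : ℝ) : EReal) +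
      ((∫⁻ u in {u | ‖u‖ ≤ 1},
        ENNReal.ofReal (-⟪π, u⟫ - powerGainPerspective p l (-⟪π, u⟫)) ∂F : ℝ≥0∞) : EReal) := by
  have hX : Measurable fun u : EuclideanSpace ℝ (Fin n) => -⟪π, u⟫ := by fun_prop
  have hX0 : ∀ᵐ u ∂F, 0 ≤ -⟪π, u⟫ := hπ.mono fun u hu => neg_nonneg.2 hu
  have hX2 : IntegrableOn (fun u => (-⟪π, u⟫) ^ 2) {u | ‖u‖ ≤ 1} F := by
    simpa only [neg_sq] using hsmall
  have small_nonneg : 0 ≤ᵐ[F.restrict {u | ‖u‖ ≤ 1}]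
      fun u => -⟪π, u⟫ - powerGainPerspective p l (-⟪π, u⟫) :=
    ae_restrict_of_ae
      (hX0.mono fun u hu => sub_nonneg.2 (powerGainPerspective_le_self hp0 hp1 hl hu))
  have inner_scaled (v) : ⟪-(l⁻¹ • π), v⟫ = l⁻¹ * -⟪π, v⟫ := by
    rw [inner_neg_left, real_inner_smul_left, mul_neg]
  have quadratic_scaled : ⟪-(l⁻¹ • π), c (-(l⁻¹ • π))⟫ = l⁻¹ ^ 2 * ⟪π, c π⟫ := by
    rw [inner_scaled, map_neg, map_smul, inner_neg_right, real_inner_smul_right]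
    ring
  rw [psi_of_mem_budgetConstraintSet (neg_inv_smul_mem_budgetConstraintSet hπ hl.le),
    ← ofReal_integral_eq_lintegral_ofReal
    (integrable_self_sub_powerGainPerspective hp0 hp1 hl hX.aemeasurable (ae_restrict_of_ae hX0)
      hX2) small_nonneg,
    EReal.coe_ennreal_ofReal, max_eq_left (integral_nonneg_of_ae small_nonneg), ← EReal.coe_mul,
    ← EReal.coe_add, EReal.coe_eq_coe_iff, mul_sub, quadratic_scaled]
  simp only [inner_scaled]
  rw [mul_integral_powerGain_sub_indicator measurableSet_norm_le_one hp0 hp1 hl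
    hX.aemeasurable hX0 hX2 hlarge]
  field_simp
  ring

theorem tendsto_mul_psi_of_inner_apply_eq_zero (hp0 : 0 < p) (hp1 : p < 1)
    (hπ : ∀ᵐ u ∂F, ⟪π, u⟫ ≤ 0)
    (hsmall : IntegrableOn (fun u => ⟪π, u⟫ ^ 2) {u | ‖u‖ ≤ 1} F)
    (hlarge : IntegrableOn (fun u => (-⟪π, u⟫) ^ p) {u | ‖u‖ ≤ 1}ᶜ F) (hc : ⟪π, c π⟫ = 0) :
    Filter.Tendsto (fun l : ℝ => (l : EReal) * psi n p F b c (-(l⁻¹ • π))) (𝓝[>] 0)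
      (𝓝 ((⟪π, b⟫ : EReal) +
        ((∫⁻ u in {u | ‖u‖ ≤ 1}, ENNReal.ofReal (-⟪π, u⟫) ∂F : ℝ≥0∞) : EReal))) := by
  have hX : Measurable fun u : EuclideanSpace ℝ (Fin n) => -⟪π, u⟫ := by fun_prop
  have hX0 : ∀ᵐ u ∂F, 0 ≤ -⟪π, u⟫ := hπ.mono fun u hu => neg_nonneg.2 hu
  have large_jumps := tendsto_integral_powerGainPerspective hp0.le hp1 hX.aemeasurable
    (ae_restrict_of_ae hX0) hlarge
  have small_jumps := tendsto_lintegral_self_sub_powerGainPerspective hp0.le hp1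
    hX.aemeasurable (ae_restrict_of_ae (s := {u | ‖u‖ ≤ 1}) hX0)
  have real_part : Filter.Tendsto (fun l => ⟪π, b⟫ + (1 - p) / 2 * ⟪π, c π⟫ * l⁻¹ -
      ∫ u in {u | ‖u‖ ≤ 1}ᶜ, powerGainPerspective p l (-⟪π, u⟫) ∂F) (𝓝[>] 0) (𝓝 ⟪π, b⟫) := by
    simpa only [hc, mul_zero, zero_mul, add_zero, sub_zero] using large_jumps.const_sub ⟪π, b⟫
  have sum_tendsto := Filter.Tendsto.comp
    (EReal.continuousAt_add (.inl (EReal.coe_ne_top _)) (.inl (EReal.coe_ne_bot _)))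
    ((EReal.tendsto_coe.2 real_part).prodMk_nhds
      ((continuous_coe_ennreal_ereal.tendsto _).comp small_jumps))
  refine sum_tendsto.congr' ?_
  filter_upwards [self_mem_nhdsWithin] with l hl
  exact (mul_psi_neg_inv_smul hp0 hp1.le hl hπ hsmall hlarge).symm

theorem tendsto_mul_psi_of_inner_apply_pos (hp0 : 0 < p) (hp1 : p < 1)
    (hπ : ∀ᵐ u ∂F, ⟪π, u⟫ ≤ 0)
    (hsmall : IntegrableOn (fun u => ⟪π, u⟫ ^ 2) {u | ‖u‖ ≤ 1} F)
    (hlarge : IntegrableOn (fun u => (-⟪π, u⟫) ^ p) {u | ‖u‖ ≤ 1}ᶜ F) (hc : 0 < ⟪π, c π⟫) :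
    Filter.Tendsto (fun l : ℝ => (l : EReal) * psi n p F b c (-(l⁻¹ • π))) (𝓝[>] 0) (𝓝 ⊤) := by
  have large_jumps := tendsto_integral_powerGainPerspective hp0.le hp1
    (by fun_prop : AEMeasurable (fun u => -⟪π, u⟫) _)
    (ae_restrict_of_ae (hπ.mono fun u hu => neg_nonneg.2 hu)) hlarge
  have gaussian_part : Filter.Tendsto (fun l : ℝ => (1 - p) / 2 * ⟪π, c π⟫ * l⁻¹)
      (𝓝[>] 0) Filter.atTop :=
    tendsto_inv_nhdsGT_zero.const_mul_atTop (mul_pos (by linarith) hc)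
  have real_part : Filter.Tendsto (fun l => ⟪π, b⟫ + (1 - p) / 2 * ⟪π, c π⟫ * l⁻¹ -
      ∫ u in {u | ‖u‖ ≤ 1}ᶜ, powerGainPerspective p l (-⟪π, u⟫) ∂F) (𝓝[>] 0) Filter.atTop :=
    (gaussian_part.atTop_add (large_jumps.const_sub ⟪π, b⟫)).congr fun l => by ring
  refine tendsto_nhds_top_mono (EReal.tendsto_coe_nhds_top_iff.2 real_part) ?_
  filter_upwards [self_mem_nhdsWithin] with l hl
  rw [mul_psi_neg_inv_smul hp0 hp1.le hl hπ hsmall hlarge]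
  exact le_add_of_nonneg_right (EReal.coe_ennreal_nonneg _)

end Psi

/-- Recession-function computation of `ψ` along `−π`.
(a) If `F(Λ⁺(π)) = 0` then `−λ⁻¹π ∈ C₀` for all `λ > 0`; if moreover `cπ = 0` then
`λ·ψ(−π/λ) → ⟨π,b⟩ − ∫_{|u|≤1} ⟨π,u⟩ dF` (a value in `(−∞,+∞]`, written here as
`⟨π,b⟩ + ∫_{|u|≤1} (−⟨π,u⟩) dF` with a nonnegative integrand a.e.) as `λ → 0⁺`, while if
`cπ ≠ 0` then `λ·ψ(−π/λ) → +∞`.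
(b) If `F(Λ⁺(π)) > 0` then `−π/λ ∉ C₀` (hence `ψ(−π/λ) = +∞`) for all small `λ > 0`, and
`λ·ψ(−π/λ) → +∞` as `λ → 0⁺`. -/
theorem psi_recession_along_neg_pi
    (n : ℕ) (hn : 1 ≤ n) (p : ℝ) (hp0 : 0 < p) (hp1 : p < 1)
    (F : Measure (EuclideanSpace ℝ (Fin n)))
    (hF0 : F {(0 : EuclideanSpace ℝ (Fin n))} = 0)
    (hFlevy : ∫⁻ u, ENNReal.ofReal (min (‖u‖ ^ (2 : ℕ)) 1) ∂F ≠ ⊤)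
    (hAF : ∫⁻ u in {u : EuclideanSpace ℝ (Fin n) | 1 < ‖u‖}, ENNReal.ofReal (‖u‖ ^ p) ∂F ≠ ⊤)
    (b : EuclideanSpace ℝ (Fin n))
    (c : EuclideanSpace ℝ (Fin n) →ₗ[ℝ] EuclideanSpace ℝ (Fin n))
    (hcsymm : ∀ x y : EuclideanSpace ℝ (Fin n), ⟪c x, y⟫ = ⟪x, c y⟫)
    (hcpsd : ∀ x : EuclideanSpace ℝ (Fin n), 0 ≤ ⟪x, c x⟫)
    (π : EuclideanSpace ℝ (Fin n)) :
    -- (a)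
    (F {u : EuclideanSpace ℝ (Fin n) | 0 < ⟪π, u⟫} = 0 →
      (∀ l : ℝ, 0 < l →
        F {u : EuclideanSpace ℝ (Fin n) | 1 + ⟪-(l⁻¹ • π), u⟫ < 0} = 0) ∧
      (c π = 0 →
        Filter.Tendsto (fun l : ℝ => (l : EReal) * psi n p F b c (-(l⁻¹ • π)))
          (𝓝[>] (0 : ℝ))
          (𝓝 (((⟪π, b⟫ : ℝ) : EReal) +
            ((∫⁻ u in {u : EuclideanSpace ℝ (Fin n) | ‖u‖ ≤ 1},
                ENNReal.ofReal (-⟪π, u⟫) ∂F : ℝ≥0∞) : EReal)))) ∧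
      (c π ≠ 0 →
        Filter.Tendsto (fun l : ℝ => (l : EReal) * psi n p F b c (-(l⁻¹ • π)))
          (𝓝[>] (0 : ℝ)) (𝓝 (⊤ : EReal)))) ∧
    -- (b)
    (F {u : EuclideanSpace ℝ (Fin n) | 0 < ⟪π, u⟫} ≠ 0 →
      (∃ l₀ : ℝ, 0 < l₀ ∧ ∀ l : ℝ, 0 < l → l ≤ l₀ →
        F {u : EuclideanSpace ℝ (Fin n) | 1 + ⟪-(l⁻¹ • π), u⟫ < 0} ≠ 0 ∧
        psi n p F b c (-(l⁻¹ • π)) = ⊤) ∧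
      Filter.Tendsto (fun l : ℝ => (l : EReal) * psi n p F b c (-(l⁻¹ • π)))
        (𝓝[>] (0 : ℝ)) (𝓝 (⊤ : EReal))) := by
  refine ⟨fun h => ?_, fun h => ?_⟩
  · have hπ : ∀ᵐ u ∂F, ⟪π, u⟫ ≤ 0 := by simpa only [ae_iff, not_le] using h
    have hsmall := integrableOn_inner_sq hFlevy π
    have hlarge := integrableOn_neg_inner_rpow hp0.le hAF hπ
    refine ⟨fun l hl => neg_inv_smul_mem_budgetConstraintSet hπ hl.le, fun hc => ?_, fun hc => ?_⟩
    · exact tendsto_mul_psi_of_inner_apply_eq_zero hp0 hp1 hπ hsmall hlarge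
        (by rw [hc, inner_zero_right])
    · exact tendsto_mul_psi_of_inner_apply_pos hp0 hp1 hπ hsmall hlarge
        (inner_apply_self_pos hcsymm hcpsd hc)
  · obtain ⟨l₀, hl₀, hnotMem⟩ := exists_forall_neg_inv_smul_notMem_budgetConstraintSet h
    have psi_top (l : ℝ) (hl : 0 < l) (hle : l ≤ l₀) : psi n p F b c (-(l⁻¹ • π)) = ⊤ :=
      psi_of_notMem_budgetConstraintSet (hnotMem l hl hle)
    refine ⟨⟨l₀, hl₀, fun l hl hle => ⟨hnotMem l hl hle, psi_top l hl hle⟩⟩, ?_⟩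
    refine tendsto_const_nhds.congr' ?_
    filter_upwards [Ioc_mem_nhdsGT hl₀] with l ⟨hl, hle⟩
    rw [psi_top l hl hle, EReal.coe_mul_top_of_pos hl]
end

section
/- The constancy space of ψ equals the null-investment set: {π ∈ ℝⁿ : ψ0⁺(π) ≤ 0 and ψ0⁺(−π) ≤ 0} = N := {π ∈ ℝⁿ : cπ = 0, F({u ∈ ℝⁿ : ⟨π,u⟩ ≠ 0}) = 0, ⟨π,b⟩ = 0}. -/
open MeasureTheory
open scoped RealInnerProductSpace ENNReal Topology

/-- The recession function `ψ0⁺(π) := sup_{λ>0} ψ(λπ)/λ` of `ψ` (using that `ψ(0) = 0`). -/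
noncomputable def psiRec (n : ℕ) (p : ℝ) (F : Measure (EuclideanSpace ℝ (Fin n)))
    (b : EuclideanSpace ℝ (Fin n))
    (c : EuclideanSpace ℝ (Fin n) →ₗ[ℝ] EuclideanSpace ℝ (Fin n))
    (π : EuclideanSpace ℝ (Fin n)) : EReal :=
  ⨆ l ∈ Set.Ioi (0 : ℝ), ((l⁻¹ : ℝ) : EReal) * psi n p F b c (l • π)

/-!
Outside the budget set `C₀` the function `ψ` is `+∞`, so `ψ0⁺(π) ≤ 0` puts the whole ray of `π` into
`C₀`, which means `⟨π,u⟩ ≥ 0` for `F`-almost every `u`. Hence `ψ0⁺(π) ≤ 0` and `ψ0⁺(-π) ≤ 0`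
together give `⟨π,u⟩ = 0` almost everywhere. The integrand of `ψ` then vanishes almost everywhere,
leaving `ψ(±π) = ∓⟨π,b⟩ + (1-p)/2 ⟨π,cπ⟩`. If both values are nonpositive, so is their sum
`(1-p)⟨π,cπ⟩`; as `c` is positive semidefinite and `p < 1`, this forces `⟨π,cπ⟩ = 0`, hence
`cπ = 0`, and then `⟨π,b⟩ = 0`.
-/

section InnerProductSpace

variable {E : Type*} [NormedAddCommGroup E] [InnerProductSpace ℝ E]

theorem inner_map_self_right_eq_zero_iff_of_isPositive {c : E →ₗ[ℝ] E} (hc : c.IsPositive) {x : E} :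
    ⟪x, c x⟫ = 0 ↔ c x = 0 := by
  let B : LinearMap.BilinForm ℝ E := innerₗ E ∘ₗ c
  have B_symm : LinearMap.IsSymm B := ⟨fun x y ↦ (hc.isSymmetric x y).trans (real_inner_comm _ _)⟩
  refine ⟨fun h ↦ ?_, fun h ↦ by rw [h, inner_zero_right]⟩
  have B_eq_zero : B x = 0 :=
    (B.apply_apply_same_eq_zero_iff hc.inner_nonneg_left B_symm).1 ((real_inner_comm _ _).trans h)
  exact inner_self_eq_zero.1 (LinearMap.congr_fun B_eq_zero (c x))

variable [MeasurableSpace E]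

/-- The budget-constraint set `C₀`: the portfolios `π` whose wealth factor `1 + ⟨π,u⟩` is negative
for `F`-almost no jump `u`. It is the effective domain of `psi`. -/
def budgetSet (F : Measure E) : Set E :=
  {π | F {u | 1 + ⟪π, u⟫ < 0} = 0}

variable {F : Measure E} {π : E}

theorem mem_budgetSet_iff_ae : π ∈ budgetSet F ↔ ∀ᵐ u ∂F, 0 ≤ 1 + ⟪π, u⟫ := by
  simp only [budgetSet, Set.mem_ofPred_eq, ae_iff, not_le]

theorem forall_smul_mem_budgetSet_iff :
    (∀ l : ℝ, 0 < l → l • π ∈ budgetSet F) ↔ ∀ᵐ u ∂F, 0 ≤ ⟪π, u⟫ := by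
  simp only [mem_budgetSet_iff_ae, real_inner_smul_left]
  refine ⟨fun h ↦ ?_, fun h l hl ↦ ?_⟩
  · have h_nat : ∀ᵐ u ∂F, ∀ k : ℕ, 0 ≤ 1 + (k + 1 : ℝ) * ⟪π, u⟫ :=
      ae_all_iff.2 fun k ↦ h (k + 1) k.cast_add_one_pos
    filter_upwards [h_nat] with u hu
    by_contra! inner_neg
    obtain ⟨k, hk⟩ := exists_lt_nsmul (neg_pos.2 inner_neg) 1
    rw [nsmul_eq_mul] at hk
    linarith [hu k]
  · filter_upwards [h] with u hu
    positivity

end InnerProductSpace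

section Psi

variable {n : ℕ} {p : ℝ} {F : Measure (EuclideanSpace ℝ (Fin n))}
  {b : EuclideanSpace ℝ (Fin n)} {c : EuclideanSpace ℝ (Fin n) →ₗ[ℝ] EuclideanSpace ℝ (Fin n)}
  {π : EuclideanSpace ℝ (Fin n)}

theorem psi_eq_top_of_notMem_budgetSet (h : π ∉ budgetSet F) : psi n p F b c π = ⊤ :=
  if_neg h

theorem psi_eq_of_ae_inner_eq_zero (h : ∀ᵐ u ∂F, ⟪π, u⟫ = 0) :
    psi n p F b c π = ((-⟪π, b⟫ - (p - 1) / 2 * ⟪π, c π⟫ : ℝ) : EReal) := by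
  have mem_budget : π ∈ budgetSet F := by
    rw [mem_budgetSet_iff_ae]
    filter_upwards [h] with u hu
    simp [hu]
  have integral_eq_zero : ∫ u, (p⁻¹ * (max (1 + ⟪π, u⟫) 0) ^ p - p⁻¹ -
      Set.indicator {u | ‖u‖ ≤ 1} (fun u ↦ ⟪π, u⟫) u) ∂F = 0 := by
    refine integral_eq_zero_of_ae ?_
    filter_upwards [h] with u hu
    simp [hu, Set.indicator]
  exact (if_pos mem_budget).trans (by rw [integral_eq_zero, sub_zero])

theorem psiRec_nonpos_iff :
    psiRec n p F b c π ≤ 0 ↔ ∀ l : ℝ, 0 < l → psi n p F b c (l • π) ≤ 0 := by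
  simp only [psiRec, iSup_le_iff, Set.mem_Ioi]
  refine forall₂_congr fun l hl ↦ ?_
  have l_inv_pos : (0 : EReal) < (l⁻¹ : ℝ) := EReal.coe_pos.2 (inv_pos.2 hl)
  simp [EReal.mul_nonpos_iff, l_inv_pos.le, l_inv_pos.not_ge]

theorem psi_nonpos_of_psiRec_nonpos (h : psiRec n p F b c π ≤ 0) : psi n p F b c π ≤ 0 := by
  simpa only [one_smul] using psiRec_nonpos_iff.1 h 1 one_pos

theorem ae_inner_nonneg_of_psiRec_nonpos (h : psiRec n p F b c π ≤ 0) :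
    ∀ᵐ u ∂F, 0 ≤ ⟪π, u⟫ := by
  refine forall_smul_mem_budgetSet_iff.1 fun l hl ↦ ?_
  by_contra notMem
  have psi_nonpos := psiRec_nonpos_iff.1 h l hl
  simp [psi_eq_top_of_notMem_budgetSet notMem] at psi_nonpos

theorem ae_inner_eq_zero_of_psiRec_nonpos (h : psiRec n p F b c π ≤ 0)
    (h_neg : psiRec n p F b c (-π) ≤ 0) : ∀ᵐ u ∂F, ⟪π, u⟫ = 0 := by
  filter_upwards [ae_inner_nonneg_of_psiRec_nonpos h,
    ae_inner_nonneg_of_psiRec_nonpos h_neg] with u inner_nonneg inner_neg_nonneg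
  rw [inner_neg_left, neg_nonneg] at inner_neg_nonneg
  exact le_antisymm inner_neg_nonneg inner_nonneg

theorem psi_nonpos_and_psi_neg_nonpos_iff (hp1 : p < 1) (hc : c.IsPositive)
    (hF : ∀ᵐ u ∂F, ⟪π, u⟫ = 0) :
    psi n p F b c π ≤ 0 ∧ psi n p F b c (-π) ≤ 0 ↔ c π = 0 ∧ ⟪π, b⟫ = 0 := by
  have hF_neg : ∀ᵐ u ∂F, ⟪-π, u⟫ = 0 := by simpa only [inner_neg_left, neg_eq_zero] using hF
  rw [psi_eq_of_ae_inner_eq_zero hF, psi_eq_of_ae_inner_eq_zero hF_neg, EReal.coe_nonpos,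
    EReal.coe_nonpos, ← inner_map_self_right_eq_zero_iff_of_isPositive hc]
  simp only [map_neg, inner_neg_left, inner_neg_right, neg_neg]
  refine ⟨fun ⟨psi_nonpos, psi_neg_nonpos⟩ ↦ ?_, fun ⟨quad_eq_zero, drift_eq_zero⟩ ↦ ?_⟩
  · have sum_nonpos : (1 - p) * ⟪π, c π⟫ ≤ 0 := by linarith
    have quad_eq_zero : ⟪π, c π⟫ = 0 :=
      le_antisymm (nonpos_of_mul_nonpos_right sum_nonpos (sub_pos.2 hp1)) (hc.inner_nonneg_right π)
    rw [quad_eq_zero] at psi_nonpos psi_neg_nonpos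
    exact ⟨quad_eq_zero, by linarith⟩
  · simp [quad_eq_zero, drift_eq_zero]

theorem psiRec_nonpos_of_null_investment (hcπ : c π = 0) (hF : ∀ᵐ u ∂F, ⟪π, u⟫ = 0)
    (hb : ⟪π, b⟫ = 0) : psiRec n p F b c π ≤ 0 := by
  refine psiRec_nonpos_iff.2 fun l _ ↦ ?_
  have hF_smul : ∀ᵐ u ∂F, ⟪l • π, u⟫ = 0 := by
    filter_upwards [hF] with u hu
    rw [real_inner_smul_left, hu, mul_zero]
  simp [psi_eq_of_ae_inner_eq_zero hF_smul, real_inner_smul_left, hcπ, hb]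

theorem psi_constancy_space_eq_null_investment_general (hp1 : p < 1) (hc : c.IsPositive) :
    {π | psiRec n p F b c π ≤ 0 ∧ psiRec n p F b c (-π) ≤ 0} =
      {π | c π = 0 ∧ F {u | ⟪π, u⟫ ≠ 0} = 0 ∧ ⟪π, b⟫ = 0} := by
  ext π
  constructor
  · rintro ⟨h, h_neg⟩
    have inner_ae_zero := ae_inner_eq_zero_of_psiRec_nonpos h h_neg
    obtain ⟨hcπ, hb⟩ := (psi_nonpos_and_psi_neg_nonpos_iff hp1 hc inner_ae_zero).1
      ⟨psi_nonpos_of_psiRec_nonpos h, psi_nonpos_of_psiRec_nonpos h_neg⟩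
    exact ⟨hcπ, ae_iff.1 inner_ae_zero, hb⟩
  · rintro ⟨hcπ, hF, hb⟩
    have inner_ae_zero : ∀ᵐ u ∂F, ⟪π, u⟫ = 0 := ae_iff.2 hF
    refine ⟨psiRec_nonpos_of_null_investment hcπ inner_ae_zero hb,
      psiRec_nonpos_of_null_investment ?_ ?_ ?_⟩
    · rw [map_neg, hcπ, neg_zero]
    · simpa only [inner_neg_left, neg_eq_zero] using inner_ae_zero
    · rw [inner_neg_left, hb, neg_zero]

end Psi

/-- The constancy space of `ψ` equals the null-investment set:
`{π | ψ0⁺(π) ≤ 0 ∧ ψ0⁺(−π) ≤ 0} = N := {π | cπ = 0, F {u | ⟨π,u⟩ ≠ 0} = 0, ⟨π,b⟩ = 0}`. -/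
theorem psi_constancy_space_eq_null_investment
    (n : ℕ) (hn : 1 ≤ n) (p : ℝ) (hp0 : 0 < p) (hp1 : p < 1)
    (F : Measure (EuclideanSpace ℝ (Fin n)))
    (hF0 : F {(0 : EuclideanSpace ℝ (Fin n))} = 0)
    (hFlevy : ∫⁻ u, ENNReal.ofReal (min (‖u‖ ^ (2 : ℕ)) 1) ∂F ≠ ⊤)
    (hAF : ∫⁻ u in {u : EuclideanSpace ℝ (Fin n) | 1 < ‖u‖}, ENNReal.ofReal (‖u‖ ^ p) ∂F ≠ ⊤)
    (b : EuclideanSpace ℝ (Fin n))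
    (c : EuclideanSpace ℝ (Fin n) →ₗ[ℝ] EuclideanSpace ℝ (Fin n))
    (hcsymm : ∀ x y : EuclideanSpace ℝ (Fin n), ⟪c x, y⟫ = ⟪x, c y⟫)
    (hcpsd : ∀ x : EuclideanSpace ℝ (Fin n), 0 ≤ ⟪x, c x⟫) :
    {π : EuclideanSpace ℝ (Fin n) |
      psiRec n p F b c π ≤ 0 ∧ psiRec n p F b c (-π) ≤ 0} =
    {π : EuclideanSpace ℝ (Fin n) | c π = 0 ∧
      F {u : EuclideanSpace ℝ (Fin n) | ⟪π, u⟫ ≠ 0} = 0 ∧ ⟪π, b⟫ = 0} := by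
  exact psi_constancy_space_eq_null_investment_general hp1
    ⟨hcsymm, fun x ↦ (hcpsd x).trans_eq (real_inner_comm _ _)⟩
end
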